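/- Let θ > 0 and let N be a geometric random variable on {0,1,2,...} with p_n := P(N=n) = (1-2^{-θ}) 2^{-θ n}. Let Y be an integrable real random variable and let (Δ_n)_{n≥0} be real random variables, with N independent of Y and of the family (Δ_n). Suppose there is a real sequence (a_n)_{n≥0} converging to a limit a ∈ ℝ such that E[Y] = a_{n₀}, E[Δ_n] = a_{n+n₀+1} - a_{n+n₀} for every n ≥ 0 (for a fixed integer n₀ ≥ 0), and Σ_{n=0}^∞ E[|Δ_n|] < ∞. Then the estimator Z = Y + Δ_N / p_N is integrable and E[Z] = a. -/

import Mathlib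

/-!
On the fibre `{N = i}` the single-term estimator equals `X i / p i`, and independence turns its
integral over this fibre into `p i * E[X i / p i] = E[X i]`. Since the fibres partition the
probability space, the estimator has expectation `∑ i, E[X i]`; the same computation for the norms
shows that it is integrable as soon as `∑ i, E‖X i‖ < ∞`. When the `E[X n]` are the increments of
a convergent sequence, the sum telescopes.
-/

open MeasureTheory ProbabilityTheory Filter
open scoped BigOperators

theorem eq_sub_of_tendsto_of_hasSum_sub {G : Type*} [AddCommGroup G] [TopologicalSpace G]
    [ContinuousSub G] [T2Space G] {a : ℕ → G} {l s : G} (ha : Tendsto a atTop (nhds l))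
    (hs : HasSum (fun n => a (n + 1) - a n) s) : s = l - a 0 :=
  tendsto_nhds_unique hs.tendsto_sum_nat <| by
    simpa only [Finset.sum_range_sub] using ha.sub_const (a 0)

theorem one_sub_rpow_neg_mul_rpow_pos {b θ : ℝ} (hb : 1 < b) (hθ : 0 < θ) (x : ℝ) :
    0 < (1 - b ^ (-θ)) * b ^ x :=
  mul_pos (sub_pos.2 <| Real.rpow_lt_one_of_one_lt_of_neg hb (neg_neg_of_pos hθ))
    (Real.rpow_pos_of_pos (zero_lt_one.trans hb) x)

theorem setIntegral_preimage_eq_smul_of_indepFun {Ω β E : Type*} [MeasurableSpace Ω]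
    {μ : Measure Ω} [MeasurableSpace β] [NormedAddCommGroup E] [NormedSpace ℝ E]
    [MeasurableSpace E] [BorelSpace E] {N : Ω → β} {X : Ω → E} {s : Set β}
    (hindep : IndepFun N X μ) (hN : Measurable N) (hX : AEStronglyMeasurable X μ)
    (hs : MeasurableSet s) :
    ∫ ω in N ⁻¹' s, X ω ∂μ = μ.real (N ⁻¹' s) • ∫ ω, X ω ∂μ :=
  ((IndepFun_iff_Indep N X μ).1 hindep).setIntegral_eq_smul hN.comap_le hX.aemeasurable
    ⟨s, hs, rfl⟩ hX.aestronglyMeasurable_id_map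

section SingleTermEstimator

variable {Ω ι E : Type*} [NormedAddCommGroup E] [NormedSpace ℝ E]

/-- The single-term randomized estimator `X_N / p_N` of `∑ i, X i`: the term selected by the random
index `N` is reweighted by the inverse of the probability `p N` of selecting it. The
definition accepts any real function as `p`, with the value `0` wherever `p (N ω) = 0`. -/
noncomputable def singleTermEstimator (p : ι → ℝ) (N : Ω → ι) (X : ι → Ω → E) (ω : Ω) : E :=
  (p (N ω))⁻¹ • X (N ω) ω

variable {p : ι → ℝ} {N : Ω → ι} {X : ι → Ω → E}

theorem eqOn_singleTermEstimator (i : ι) :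
    Set.EqOn (singleTermEstimator p N X) ((p i)⁻¹ • X i) (N ⁻¹' {i}) := by
  rintro ω rfl
  rfl

theorem norm_singleTermEstimator (hp : ∀ i, 0 ≤ p i) (ω : Ω) :
    ‖singleTermEstimator p N X ω‖ = singleTermEstimator p N (fun i ω => ‖X i ω‖) ω := by
  simp only [singleTermEstimator, norm_smul, norm_inv, Real.norm_of_nonneg (hp _), smul_eq_mul]

variable [MeasurableSpace Ω] {μ : Measure Ω} [MeasurableSpace ι] [MeasurableSingletonClass ι]

theorem integrableOn_singleTermEstimator (hN : Measurable N) {i : ι} (hX : Integrable (X i) μ) :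
    IntegrableOn (singleTermEstimator p N X) (N ⁻¹' {i}) μ :=
  (hX.smul (p i)⁻¹).integrableOn.congr_fun (eqOn_singleTermEstimator i).symm
    (hN (measurableSet_singleton i))

variable [MeasurableSpace E] [BorelSpace E]

theorem setIntegral_singleTermEstimator (hN : Measurable N) {i : ι} (hpi : 0 < p i)
    (hNp : μ (N ⁻¹' {i}) = ENNReal.ofReal (p i)) (hX : AEStronglyMeasurable (X i) μ)
    (hindep : IndepFun N (X i) μ) :
    ∫ ω in N ⁻¹' {i}, singleTermEstimator p N X ω ∂μ = ∫ ω, X i ω ∂μ := by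
  have hreal : μ.real (N ⁻¹' {i}) = p i := by
    rw [measureReal_def, hNp, ENNReal.toReal_ofReal hpi.le]
  calc
    ∫ ω in N ⁻¹' {i}, singleTermEstimator p N X ω ∂μ
    _ = ∫ ω in N ⁻¹' {i}, (p i)⁻¹ • X i ω ∂μ :=
      setIntegral_congr_fun (hN (measurableSet_singleton i)) (eqOn_singleTermEstimator i)
    _ = (p i)⁻¹ • p i • ∫ ω, X i ω ∂μ := by
      rw [integral_smul, setIntegral_preimage_eq_smul_of_indepFun hindep hN hX
        (measurableSet_singleton i), hreal]
    _ = ∫ ω, X i ω ∂μ := inv_smul_smul₀ hpi.ne' _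

variable [Countable ι]

theorem integrable_singleTermEstimator (hN : Measurable N) (hp : ∀ i, 0 < p i)
    (hNp : ∀ i, μ (N ⁻¹' {i}) = ENNReal.ofReal (p i)) (hX : ∀ i, Integrable (X i) μ)
    (hindep : ∀ i, IndepFun N (X i) μ) (hsum : Summable fun i => ∫ ω, ‖X i ω‖ ∂μ) :
    Integrable (singleTermEstimator p N X) μ := by
  have hnorm (i : ι) :
      ∫ ω in N ⁻¹' {i}, ‖singleTermEstimator p N X ω‖ ∂μ = ∫ ω, ‖X i ω‖ ∂μ := by
    simp only [norm_singleTermEstimator fun i => (hp i).le]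
    exact setIntegral_singleTermEstimator hN (hp i) (hNp i) (hX i).norm.aestronglyMeasurable
      ((hindep i).comp measurable_id measurable_norm)
  have hUnion : IntegrableOn (singleTermEstimator p N X) (⋃ i, N ⁻¹' {i}) μ :=
    integrableOn_iUnion_of_summable_integral_norm
      (fun i => integrableOn_singleTermEstimator hN (hX i)) (by simpa only [hnorm] using hsum)
  rwa [← Set.preimage_iUnion, Set.iUnion_of_singleton, Set.preimage_univ,
    integrableOn_univ] at hUnion

theorem hasSum_integral_singleTermEstimator (hN : Measurable N) (hp : ∀ i, 0 < p i)
    (hNp : ∀ i, μ (N ⁻¹' {i}) = ENNReal.ofReal (p i)) (hX : ∀ i, AEStronglyMeasurable (X i) μ)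
    (hindep : ∀ i, IndepFun N (X i) μ) (hint : Integrable (singleTermEstimator p N X) μ) :
    HasSum (fun i => ∫ ω, X i ω ∂μ) (∫ ω, singleTermEstimator p N X ω ∂μ) := by
  have hfibres := hasSum_integral_iUnion (fun i => hN (measurableSet_singleton i))
    (pairwise_disjoint_fiber N) hint.integrableOn
  simpa only [setIntegral_singleTermEstimator hN (hp _) (hNp _) (hX _) (hindep _),
    ← Set.preimage_iUnion, Set.iUnion_of_singleton, Set.preimage_univ, setIntegral_univ]
    using hfibres

end SingleTermEstimator

theorem stmt5_general {Ω E : Type*} [MeasurableSpace Ω] {μ : Measure Ω}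
    [NormedAddCommGroup E] [NormedSpace ℝ E] [CompleteSpace E] [MeasurableSpace E] [BorelSpace E]
    {N : Ω → ℕ} (hN : Measurable N) {p : ℕ → ℝ} (hp : ∀ n, 0 < p n)
    (hNp : ∀ n, μ (N ⁻¹' {n}) = ENNReal.ofReal (p n))
    {Y : Ω → E} {Δ : ℕ → Ω → E} (hindep : ∀ n, IndepFun N (Δ n) μ)
    (hYint : Integrable Y μ) (hΔint : ∀ n, Integrable (Δ n) μ)
    {a : ℕ → E} {l : E} (ha : Tendsto a atTop (nhds l)) {n₀ : ℕ}
    (hY : ∫ ω, Y ω ∂μ = a n₀) (hΔ : ∀ n, ∫ ω, Δ n ω ∂μ = a (n + n₀ + 1) - a (n + n₀))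
    (hsum : Summable fun n => ∫ ω, ‖Δ n ω‖ ∂μ) :
    Integrable (fun ω => Y ω + (p (N ω))⁻¹ • Δ (N ω) ω) μ ∧
      ∫ ω, (Y ω + (p (N ω))⁻¹ • Δ (N ω) ω) ∂μ = l := by
  have hint : Integrable (singleTermEstimator p N Δ) μ :=
    integrable_singleTermEstimator hN hp hNp hΔint hindep hsum
  have hseries : HasSum (fun n => a (n + 1 + n₀) - a (n + n₀))
      (∫ ω, singleTermEstimator p N Δ ω ∂μ) := by
    simpa only [hΔ, add_right_comm _ n₀ 1] using hasSum_integral_singleTermEstimator hN hp hNp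
      (fun n => (hΔint n).aestronglyMeasurable) hindep hint
  have hmean : ∫ ω, singleTermEstimator p N Δ ω ∂μ = l - a n₀ := by
    simpa only [zero_add] using
      eq_sub_of_tendsto_of_hasSum_sub ((tendsto_add_atTop_iff_nat n₀).2 ha) hseries
  refine ⟨hYint.add hint, (integral_add hYint hint).trans ?_⟩
  rw [hY, hmean, add_sub_cancel]

/-- unbiasedness of the single-term randomized multilevel estimator.
`N` is geometric on `{0,1,2,...}` with `p_n = (1-2^{-θ})2^{-θn}`, independent of `Y` and of
the family `(Δ_n)`.  If `E[Y] = a_{n₀}`, `E[Δ_n] = a_{n+n₀+1} - a_{n+n₀}` with `a_n → a`,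
and `Σ_n E|Δ_n| < ∞`, then `Z = Y + Δ_N / p_N` is integrable with `E[Z] = a`. -/
theorem stmt5 {Ω : Type*} [MeasureSpace Ω] [IsProbabilityMeasure (ℙ : Measure Ω)]
    (θ : ℝ) (hθ : 0 < θ)
    (N : Ω → ℕ) (hNmeas : Measurable N)
    (p : ℕ → ℝ) (hp : ∀ n, p n = (1 - (2 : ℝ) ^ (-θ)) * (2 : ℝ) ^ (-θ * n))
    (hNgeom : ∀ n, (ℙ : Measure Ω) {ω | N ω = n} = ENNReal.ofReal (p n))
    (Y : Ω → ℝ) (Δ : ℕ → Ω → ℝ)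
    (hindep : IndepFun N (fun ω => (Y ω, fun n => Δ n ω)) ℙ)
    (hYint : Integrable Y ℙ) (hΔint : ∀ n, Integrable (Δ n) ℙ)
    (a : ℕ → ℝ) (alim : ℝ) (ha : Tendsto a atTop (nhds alim))
    (n₀ : ℕ)
    (hY : ∫ ω, Y ω = a n₀)
    (hΔ : ∀ n, ∫ ω, Δ n ω = a (n + n₀ + 1) - a (n + n₀))
    (hsum : Summable fun n => ∫ ω, |Δ n ω|) :
    Integrable (fun ω => Y ω + Δ (N ω) ω / p (N ω)) ℙ ∧
      ∫ ω, (Y ω + Δ (N ω) ω / p (N ω)) = alim := by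
  simpa only [smul_eq_mul, div_eq_inv_mul] using stmt5_general (Δ := Δ) hNmeas
    (fun n => hp n ▸ one_sub_rpow_neg_mul_rpow_pos one_lt_two hθ _) hNgeom
    (fun n => hindep.comp measurable_id ((measurable_pi_apply n).comp measurable_snd))
    hYint hΔint ha hY hΔ hsum
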